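/- There is an absolute constant C > 0 such that the following holds. Let G be an abelian group, let A ⊆ G be a finite set with |A| ≥ 2, and let η ∈ (0,1]. Then there is a finite set L ⊆ G such that Sym_η(A) ⊆ Span(L) and |L| ≤ C·η^{−2}·log|A|. -/

import Mathlib

open Pointwise

/-- The span of a finite set `L`: all sums `∑_{x ∈ L} σ_x • x` with `σ_x ∈ {-1,0,1}`. -/
def Span {G : Type*} [AddCommGroup G] (L : Finset G) : Set G :=
  {y | ∃ σ : G → ℤ, (∀ x, σ x = -1 ∨ σ x = 0 ∨ σ x = 1) ∧ y = ∑ x ∈ L, σ x • x}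

/-- The symmetry set of `A` at threshold `η`: those `x` with `|A ∩ (x + A)| ≥ η|A|`. -/
noncomputable def symmSet {G : Type*} [AddCommGroup G] [DecidableEq G]
    (A : Finset G) (η : ℝ) : Finset G :=
  (A - A).filter fun x => η * A.card ≤ ((A ∩ A.image (x + ·)).card : ℝ)

/-!
Let `L` be a maximal dissociated subset of `Sym_η(A)`; maximality gives `Sym_η(A) ⊆ Span L`.
To bound `|L|`, let `ψ` be a uniformly distributed random character of `G` (a point of the compact
dual group under Haar measure), and let `F = |∑_{a ∈ A} ψ(a)|² / |A|`, a probability density bounded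
by `|A|` whose correlation with `Re ψ(x)` is `|A ∩ (x + A)| / |A|`. Hence
`Y = η ∑_{x ∈ L} Re ψ(x)` has mean at least `η² |L|` under `F`. Dissociativity makes the `Re ψ(x)`
behave like independent variables in Riesz products, so that `𝔼 exp Y ≤ exp (η² |L| / 2)`, and
`exp (η² |L|) ≤ 𝔼 (F exp Y) ≤ |A| exp (η² |L| / 2)` by Jensen's inequality.
-/

open MeasureTheory ComplexConjugate

section Characters

variable {G : Type*} [AddCommGroup G]

theorem ker_mk'_comp_ratCast :
    ((QuotientAddGroup.mk' (AddSubgroup.zmultiples (1 : ℝ))).comp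
      (Rat.castHom ℝ).toAddMonoidHom).ker = AddSubgroup.zmultiples (1 : ℚ) := by
  ext q
  simp only [AddMonoidHom.mem_ker, AddMonoidHom.comp_apply, QuotientAddGroup.mk'_apply,
    QuotientAddGroup.eq_zero_iff, AddSubgroup.mem_zmultiples_iff, zsmul_one]
  refine exists_congr fun n ↦ ?_
  change (n : ℝ) = (q : ℝ) ↔ (n : ℚ) = q
  norm_cast

theorem exists_addChar_circle_apply_ne_one {x : G} (hx : x ≠ 0) :
    ∃ χ : AddChar G Circle, χ x ≠ 1 := by
  obtain ⟨c, hc⟩ := CharacterModule.exists_character_apply_ne_zero_of_ne_zero hx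
  let ι : AddCircle (1 : ℚ) →+ AddCircle (1 : ℝ) :=
    QuotientAddGroup.lift _ _ ker_mk'_comp_ratCast.ge
  have hι : Function.Injective ι :=
    (QuotientAddGroup.injective_lift_iff _ _ ker_mk'_comp_ratCast.ge).2 ker_mk'_comp_ratCast.symm
  have hι_circle : Function.Injective fun z ↦ (ι z).toCircle :=
    (AddCircle.injective_toCircle one_ne_zero).comp hι
  refine ⟨AddCircle.toCircle_addChar.compAddMonoidHom (ι.comp c), fun h ↦ hc (hι_circle ?_)⟩
  simpa only [map_zero, AddCircle.toCircle_zero] using! h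

theorem addChar_circle_sum (χ : AddChar G Circle) (s : Finset G) :
    (χ (∑ x ∈ s, x) : ℂ) = ∏ x ∈ s, (χ x : ℂ) :=
  map_prod (Circle.coeHom.comp χ.toMonoidHom) Multiplicative.ofAdd s

theorem addChar_circle_sub (χ : AddChar G Circle) (x y : G) :
    (χ (x - y) : ℂ) = χ x * conj (χ y : ℂ) := by
  rw [AddChar.map_sub_eq_div, div_eq_mul_inv, Circle.coe_mul, Circle.coe_inv_eq_conj]

theorem prod_add_re_mul_addChar (χ : AddChar G Circle) (s : Finset G) [DecidableEq G]
    (c : G → ℝ) (d : G → ℂ) :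
    ((∏ x ∈ s, (c x + (d x * χ x).re) : ℝ) : ℂ) =
      ∑ t ∈ s.powerset, ∑ u ∈ (s \ t).powerset,
        (∏ x ∈ t, (c x : ℂ)) * ((∏ x ∈ u, d x / 2) * ∏ x ∈ (s \ t) \ u, conj (d x) / 2) *
          χ (∑ x ∈ u, x - ∑ x ∈ (s \ t) \ u, x) := by
  have re_eq (x : G) : ((d x * χ x).re : ℂ) = d x / 2 * χ x + conj (d x) / 2 * conj (χ x : ℂ) := by
    rw [Complex.re_eq_add_conj, map_mul]
    ring
  simp only [Complex.ofReal_prod, Complex.ofReal_add, re_eq]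
  simp only [Finset.prod_add, Finset.prod_mul_distrib, addChar_circle_sub, addChar_circle_sum,
    map_prod, Finset.mul_sum]
  refine Finset.sum_congr rfl fun t _ ↦ Finset.sum_congr rfl fun u _ ↦ ?_
  ring

theorem norm_sum_addChar_sq_mul (χ : AddChar G Circle) (A : Finset G) (x : G) :
    ((‖∑ a ∈ A, (χ a : ℂ)‖ ^ 2 : ℝ) : ℂ) * χ x = ∑ a ∈ A, ∑ b ∈ A, (χ (x + a - b) : ℂ) := by
  simp only [addChar_circle_sub, AddChar.map_add_eq_mul, Circle.coe_mul]
  rw [Complex.ofReal_pow, ← Complex.mul_conj', map_sum, Finset.sum_mul_sum, Finset.sum_mul]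
  refine Finset.sum_congr rfl fun a _ ↦ ?_
  rw [Finset.sum_mul]
  exact Finset.sum_congr rfl fun b _ ↦ by ring

end Characters

theorem card_inter_image_add_left {G : Type*} [AddGroup G] [DecidableEq G] (A : Finset G) (x : G) :
    (A ∩ A.image (x + ·)).card = (A.filter fun a ↦ x + a ∈ A).card := by
  rw [← Finset.card_image_of_injective (A.filter _) (add_right_injective x)]
  congr 1
  ext y
  simp only [Finset.mem_inter, Finset.mem_image, Finset.mem_filter]
  grind

theorem integral_monoidHom_eq_zero {K 𝕜 : Type*} [Group K] [MeasurableSpace K] [MeasurableMul K]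
    [RCLike 𝕜] {μ : Measure K} [μ.IsMulLeftInvariant] {f : K →* 𝕜} (hf : f ≠ 1) :
    ∫ k, f k ∂μ = 0 := by
  obtain ⟨g, hg⟩ := DFunLike.ne_iff.1 hf
  have invariance : f g * ∫ k, f k ∂μ = ∫ k, f k ∂μ := by
    simpa only [map_mul, integral_const_mul] using integral_mul_left_eq_self f g
  by_contra h
  exact hg ((mul_eq_right₀ h).1 invariance)

theorem exp_integral_mul_le_integral_mul_exp {Ω : Type*} [MeasurableSpace Ω] {μ : Measure Ω}
    {F Y : Ω → ℝ} (hF : 0 ≤ F) (hF_one : ∫ ω, F ω ∂μ = 1)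
    (hFY : Integrable (fun ω ↦ F ω * Y ω) μ) (hFexp : Integrable (fun ω ↦ F ω * Real.exp (Y ω)) μ) :
    Real.exp (∫ ω, F ω * Y ω ∂μ) ≤ ∫ ω, F ω * Real.exp (Y ω) ∂μ := by
  set m := ∫ ω, F ω * Y ω ∂μ with hm
  have hF_int : Integrable F μ := .of_integral_ne_zero (by simp [hF_one])
  -- The tangent to `exp` at the mean `m` lies below `exp`.
  have tangent (ω : Ω) :
      Real.exp m * ((1 - m) * F ω + F ω * Y ω) ≤ F ω * Real.exp (Y ω) := calc
    _ = F ω * (Real.exp m * (Y ω - m + 1)) := by ring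
    _ ≤ F ω * (Real.exp m * Real.exp (Y ω - m)) := by
      gcongr
      exacts [hF ω, Real.add_one_le_exp _]
    _ = F ω * Real.exp (Y ω) := by rw [← Real.exp_add, add_sub_cancel]
  calc
    Real.exp m = ∫ ω, Real.exp m * ((1 - m) * F ω + F ω * Y ω) ∂μ := by
      rw [integral_const_mul, integral_add (hF_int.const_mul _) hFY, integral_const_mul, hF_one,
        ← hm]
      ring
    _ ≤ ∫ ω, F ω * Real.exp (Y ω) ∂μ :=
      integral_mono (((hF_int.const_mul _).add hFY).const_mul _) hFexp tangent

theorem exp_re_le_cosh_add_re_mul (z : ℂ) :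
    Real.exp z.re ≤ Real.cosh ‖z‖ + z.re * (Real.sinh ‖z‖ / ‖z‖) := by
  obtain rfl | hz := eq_or_ne z 0
  · simp
  have hz_norm : ‖z‖ ≠ 0 := norm_ne_zero_iff.2 hz
  have hre : |z.re / ‖z‖| ≤ 1 := by
    rw [abs_div, abs_norm]
    exact div_le_one_of_le₀ (Complex.abs_re_le_norm z) (norm_nonneg z)
  convert Real.exp_mul_le_cosh_add_mul_sinh hre ‖z‖ using 2
  · rw [div_mul_cancel₀ _ hz_norm]
  · ring

/-- A random character of `G`, given as a family `ψ` over a probability space `(Ω, μ)`, is uniform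
if it has the law of a Haar-random point of the dual group, which is expressed by the vanishing of
its nontrivial Fourier coefficients. The sample space carries a topology so that, when it is
compact, all continuous expressions in the values of `ψ` are integrable. -/
structure IsUniformCharacter {G Ω : Type*} [AddCommGroup G] [TopologicalSpace Ω]
    [MeasurableSpace Ω] (μ : Measure Ω) (ψ : Ω → AddChar G Circle) : Prop where
  continuous_apply (x : G) : Continuous fun ω ↦ ψ ω x
  integral_apply {x : G} (hx : x ≠ 0) : ∫ ω, (ψ ω x : ℂ) ∂μ = 0

universe u

theorem exists_isUniformCharacter (G : Type u) [AddCommGroup G] :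
    ∃ (Ω : Type u) (_ : TopologicalSpace Ω) (_ : CompactSpace Ω) (_ : MeasurableSpace Ω)
      (_ : BorelSpace Ω) (μ : Measure Ω) (_ : IsProbabilityMeasure μ) (ψ : Ω → AddChar G Circle),
      IsUniformCharacter μ ψ := by
  let : TopologicalSpace (Multiplicative G) := ⊥
  have : DiscreteTopology (Multiplicative G) := ⟨rfl⟩
  let K := PontryaginDual (Multiplicative G)
  let : MeasurableSpace K := borel K
  have : BorelSpace K := ⟨rfl⟩
  let μ : Measure K := Measure.haarMeasure ⊤
  have : IsProbabilityMeasure μ := ⟨Measure.haarMeasure_self (K₀ := ⊤)⟩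
  let ψ (k : K) : AddChar G Circle :=
    ⟨fun x ↦ k (Multiplicative.ofAdd x), map_one k, fun x y ↦ map_mul k _ _⟩
  refine ⟨K, inferInstance, inferInstance, inferInstance, inferInstance, μ, inferInstance, ψ,
    fun x ↦ ContinuousEvalConst.continuous_eval_const (F := Multiplicative G →ₜ* Circle)
      (Multiplicative.ofAdd x), fun {x} hx ↦ ?_⟩
  let evalHom : K →* ℂ :=
    ⟨⟨fun k ↦ (k (Multiplicative.ofAdd x) : ℂ), rfl⟩, fun _ _ ↦ rfl⟩
  have heval : evalHom ≠ 1 := fun h ↦ by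
    obtain ⟨χ, hχ⟩ := exists_addChar_circle_apply_ne_one hx
    let k : K := (⟨χ.toMonoidHom, continuous_of_discreteTopology⟩ : Multiplicative G →ₜ* Circle)
    exact hχ (Circle.ext (DFunLike.congr_fun h k))
  exact integral_monoidHom_eq_zero heval

theorem integrable_of_continuous_of_compactSpace {X E : Type*} [TopologicalSpace X] [CompactSpace X]
    [MeasurableSpace X] [OpensMeasurableSpace X] {μ : Measure X} [IsFiniteMeasureOnCompacts μ]
    [NormedAddCommGroup E] {f : X → E} (hf : Continuous f) : Integrable f μ :=
  hf.integrable_of_hasCompactSupport (.of_compactSpace f)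

namespace IsUniformCharacter

variable {G Ω : Type*} [AddCommGroup G] [TopologicalSpace Ω] [MeasurableSpace Ω] {μ : Measure Ω}
  {ψ : Ω → AddChar G Circle}

theorem continuous_coe_apply (hψ : IsUniformCharacter μ ψ) (x : G) :
    Continuous fun ω ↦ (ψ ω x : ℂ) :=
  continuous_subtype_val.comp (hψ.continuous_apply x)

variable [IsProbabilityMeasure μ]

theorem integral_apply_eq_ite [DecidableEq G] (hψ : IsUniformCharacter μ ψ) (x : G) :
    ∫ ω, (ψ ω x : ℂ) ∂μ = if x = 0 then 1 else 0 := by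
  split_ifs with hx
  · simp [hx]
  · exact hψ.integral_apply hx

variable [CompactSpace Ω] [BorelSpace Ω]

theorem integral_prod_add_re_mul (hψ : IsUniformCharacter μ ψ) {s : Finset G}
    (hs : AddDissociated (s : Set G)) (c : G → ℝ) (d : G → ℂ) :
    ∫ ω, ∏ x ∈ s, (c x + (d x * ψ ω x).re) ∂μ = ∏ x ∈ s, c x := by
  classical
  have hint (x : G) : Integrable (fun ω ↦ (ψ ω x : ℂ)) μ :=
    integrable_of_continuous_of_compactSpace (hψ.continuous_coe_apply x)
  have frequency_ne_zero {t u : Finset G} (ht : t ∈ s.powerset) (hts : t ≠ s)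
      (hu : u ∈ (s \ t).powerset) : ∑ x ∈ u, x - ∑ x ∈ (s \ t) \ u, x ≠ 0 := by
    rw [Finset.mem_powerset] at ht hu
    have hst : s \ t ≠ ∅ := fun h ↦ hts (ht.antisymm (Finset.sdiff_eq_empty_iff_subset.1 h))
    exact sub_ne_zero.2 <| hs.ne (Finset.coe_subset.2 (hu.trans Finset.sdiff_subset))
      (Finset.coe_subset.2 (Finset.sdiff_subset.trans Finset.sdiff_subset))
      (sdiff_ne_right.2 (.inl hst)).symm
  apply Complex.ofReal_injective
  rw [← integral_complex_ofReal]
  simp_rw [prod_add_re_mul_addChar]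
  rw [integral_finsetSum _ fun t _ ↦ integrable_finsetSum _ fun u _ ↦ (hint _).const_mul _,
    Finset.sum_eq_single_of_mem s (Finset.mem_powerset_self s)]
  · simp
  · intro t ht hts
    rw [integral_finsetSum _ fun u _ ↦ (hint _).const_mul _]
    refine Finset.sum_eq_zero fun u hu ↦ ?_
    rw [integral_const_mul, hψ.integral_apply (frequency_ne_zero ht hts hu), mul_zero]

theorem integral_exp_re_sum_le (hψ : IsUniformCharacter μ ψ) {s : Finset G}
    (hs : AddDissociated (s : Set G)) (c : G → ℂ) :
    ∫ ω, Real.exp (∑ x ∈ s, c x * ψ ω x).re ∂μ ≤ Real.exp ((∑ x ∈ s, ‖c x‖ ^ 2) / 2) := by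
  let d (x : G) : ℂ := c x * (Real.sinh ‖c x‖ / ‖c x‖ : ℝ)
  have pointwise (ω : Ω) (x : G) :
      Real.exp (c x * ψ ω x).re ≤ Real.cosh ‖c x‖ + (d x * ψ ω x).re := by
    convert exp_re_le_cosh_add_re_mul (c x * ψ ω x) using 2
    · rw [norm_mul, Circle.norm_coe, mul_one]
    · rw [norm_mul, Circle.norm_coe, mul_one, mul_right_comm, Complex.re_mul_ofReal]
  have hψ_cont := hψ.continuous_coe_apply
  calc
    _ ≤ ∫ ω, ∏ x ∈ s, (Real.cosh ‖c x‖ + (d x * ψ ω x).re) ∂μ := by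
      refine integral_mono (integrable_of_continuous_of_compactSpace (by fun_prop))
        (integrable_of_continuous_of_compactSpace (by fun_prop)) fun ω ↦ ?_
      simp only [Complex.re_sum, Real.exp_sum]
      exact Finset.prod_le_prod (fun _ _ ↦ (Real.exp_pos _).le) fun x _ ↦ pointwise ω x
    _ = ∏ x ∈ s, Real.cosh ‖c x‖ := hψ.integral_prod_add_re_mul hs _ _
    _ ≤ ∏ x ∈ s, Real.exp (‖c x‖ ^ 2 / 2) :=
      Finset.prod_le_prod (fun _ _ ↦ (Real.cosh_pos _).le) fun _ _ ↦ Real.cosh_le_exp_half_sq _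
    _ = _ := by rw [← Real.exp_sum, Finset.sum_div]

theorem card_le_of_forall_le_integral_mul_re (hψ : IsUniformCharacter μ ψ) {s : Finset G}
    (hs : AddDissociated (s : Set G)) {F : Ω → ℝ} {M η : ℝ} (hF_cont : Continuous F)
    (hF : 0 ≤ F) (hF_one : ∫ ω, F ω ∂μ = 1) (hFM : ∀ ω, F ω ≤ M) (hη : 0 < η)
    (hsF : ∀ x ∈ s, η ≤ ∫ ω, F ω * (ψ ω x : ℂ).re ∂μ) :
    (s.card : ℝ) ≤ 2 * η⁻¹ ^ 2 * Real.log M := by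
  let Y (ω : Ω) : ℝ := (∑ x ∈ s, η * ψ ω x : ℂ).re
  have hψ_cont := hψ.continuous_coe_apply
  have hY_cont : Continuous Y := by fun_prop
  have integrable {f : Ω → ℝ} (hf : Continuous f) : Integrable f μ :=
    integrable_of_continuous_of_compactSpace hf
  have mean_ge : s.card * η ^ 2 ≤ ∫ ω, F ω * Y ω ∂μ := by
    have expand (ω : Ω) : F ω * Y ω = ∑ x ∈ s, η * (F ω * (ψ ω x : ℂ).re) := by
      simp only [Y, Complex.re_sum, Complex.re_ofReal_mul, Finset.mul_sum, mul_left_comm]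
    simp_rw [expand]
    rw [integral_finsetSum _ fun x _ ↦ integrable (by fun_prop), ← nsmul_eq_mul]
    refine Finset.card_nsmul_le_sum _ _ _ fun x hx ↦ ?_
    rw [integral_const_mul, sq]
    exact mul_le_mul_of_nonneg_left (hsF x hx) hη.le
  have hM : 0 < M := by
    by_contra! hM
    have := integral_nonpos (μ := μ) fun ω ↦ (hFM ω).trans hM
    linarith
  have exp_le : Real.exp (s.card * η ^ 2) ≤ M * Real.exp (s.card * η ^ 2 / 2) := calc
    _ ≤ Real.exp (∫ ω, F ω * Y ω ∂μ) := Real.exp_le_exp.2 mean_ge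
    _ ≤ ∫ ω, F ω * Real.exp (Y ω) ∂μ := exp_integral_mul_le_integral_mul_exp hF hF_one
      (integrable (by fun_prop)) (integrable (by fun_prop))
    _ ≤ ∫ ω, M * Real.exp (Y ω) ∂μ :=
      integral_mono (integrable (by fun_prop)) (integrable (by fun_prop)) fun ω ↦
        mul_le_mul_of_nonneg_right (hFM ω) (Real.exp_pos _).le
    _ ≤ M * Real.exp (s.card * η ^ 2 / 2) := by
      rw [integral_const_mul]
      gcongr
      simpa [Y] using hψ.integral_exp_re_sum_le hs fun _ ↦ (η : ℂ)
  have le_log : s.card * η ^ 2 / 2 ≤ Real.log M := by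
    have := Real.log_le_log (Real.exp_pos _) exp_le
    rw [Real.log_mul hM.ne' (Real.exp_pos _).ne', Real.log_exp, Real.log_exp] at this
    linarith
  calc
    (s.card : ℝ) = 2 * η⁻¹ ^ 2 * (s.card * η ^ 2 / 2) := by field_simp
    _ ≤ 2 * η⁻¹ ^ 2 * Real.log M := by gcongr

theorem integral_norm_sum_sq_mul [DecidableEq G] (hψ : IsUniformCharacter μ ψ) (A : Finset G)
    (x : G) :
    ∫ ω, ((‖∑ a ∈ A, (ψ ω a : ℂ)‖ ^ 2 : ℝ) : ℂ) * ψ ω x ∂μ = (A ∩ A.image (x + ·)).card := by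
  have hint (y : G) : Integrable (fun ω ↦ (ψ ω y : ℂ)) μ :=
    integrable_of_continuous_of_compactSpace (hψ.continuous_coe_apply y)
  simp_rw [norm_sum_addChar_sq_mul]
  rw [integral_finsetSum _ fun a _ ↦ integrable_finsetSum _ fun b _ ↦ hint _]
  simp_rw [integral_finsetSum _ fun _ _ ↦ hint _, hψ.integral_apply_eq_ite, sub_eq_zero,
    Finset.sum_ite_eq]
  rw [card_inter_image_add_left, ← Finset.sum_filter, Finset.sum_const, nsmul_one]

theorem integral_norm_sum_sq_mul_re [DecidableEq G] (hψ : IsUniformCharacter μ ψ) (A : Finset G)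
    (x : G) :
    ∫ ω, ‖∑ a ∈ A, (ψ ω a : ℂ)‖ ^ 2 * (ψ ω x : ℂ).re ∂μ = (A ∩ A.image (x + ·)).card := by
  have hψ_cont := hψ.continuous_coe_apply
  have hint : Integrable (fun ω ↦ ((‖∑ a ∈ A, (ψ ω a : ℂ)‖ ^ 2 : ℝ) : ℂ) * ψ ω x) μ :=
    integrable_of_continuous_of_compactSpace (by fun_prop)
  simp_rw [← Complex.re_ofReal_mul]
  refine (integral_re hint).trans ?_
  rw [hψ.integral_norm_sum_sq_mul]
  exact Complex.natCast_re _

end IsUniformCharacter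

section SymmetrySets

variable {G : Type*} [AddCommGroup G]

theorem card_le_of_addDissociated_of_subset_symmSet [DecidableEq G] {A s : Finset G} {η : ℝ}
    (hs : AddDissociated (s : Set G)) (hA : A.Nonempty) (hη : 0 < η) (hsA : s ⊆ symmSet A η) :
    (s.card : ℝ) ≤ 2 * η⁻¹ ^ 2 * Real.log A.card := by
  obtain ⟨Ω, _, _, _, _, μ, _, ψ, hψ⟩ := exists_isUniformCharacter G
  have hA_pos : (0 : ℝ) < A.card := by exact_mod_cast hA.card_pos
  have hψ_cont := hψ.continuous_coe_apply
  let F (ω : Ω) : ℝ := ‖∑ a ∈ A, (ψ ω a : ℂ)‖ ^ 2 / A.card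
  have integral_F_mul_re (x : G) :
      ∫ ω, F ω * (ψ ω x : ℂ).re ∂μ = (A ∩ A.image (x + ·)).card / A.card := by
    simp_rw [F, div_mul_eq_mul_div, integral_div, hψ.integral_norm_sum_sq_mul_re]
  refine hψ.card_le_of_forall_le_integral_mul_re hs (F := F) (by fun_prop)
    (fun ω ↦ by positivity) ?_ (fun ω ↦ ?_) hη fun x hx ↦ ?_
  · simpa [hA_pos.ne'] using integral_F_mul_re 0
  · have norm_le : ‖∑ a ∈ A, (ψ ω a : ℂ)‖ ≤ A.card :=
      (norm_sum_le _ _).trans_eq (by simp [Circle.norm_coe])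
    rw [div_le_iff₀ hA_pos, ← sq]
    gcongr
  · rw [integral_F_mul_re, le_div_iff₀ hA_pos]
    exact (Finset.mem_filter.1 (hsA hx)).2

theorem coe_subset_span (s : Finset G) : (s : Set G) ⊆ Span s := by
  classical
  intro a ha
  refine ⟨Pi.single a 1, fun b ↦ ?_, ?_⟩
  · obtain rfl | hab := eq_or_ne a b <;> simp [*]
  · simp [Pi.single_apply, Finset.mem_coe.1 ha]

theorem sum_sub_sum_mem_span {s t u : Finset G} (ht : t ⊆ s) (hu : u ⊆ s) :
    ∑ a ∈ t, a - ∑ a ∈ u, a ∈ Span s := by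
  classical
  refine ⟨fun a ↦ (if a ∈ t then 1 else 0) - if a ∈ u then 1 else 0, fun a ↦ ?_, ?_⟩
  · dsimp only
    split_ifs <;> simp
  · simp [sub_smul, Finset.sum_sub_distrib, ite_smul, Finset.inter_eq_right.2, ht, hu]

theorem mem_span_of_not_addDissociated_insert {t : Finset G} {a : G}
    (ht : AddDissociated (t : Set G)) (hat : ¬AddDissociated (insert a (t : Set G))) :
    a ∈ Span t := by
  classical
  obtain ⟨u, v, hu, hv, hdisj, hne, hsum⟩ := not_addDissociated_iff_exists_disjoint.1 hat
  rw [← Finset.coe_insert, Finset.coe_subset] at hu hv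
  wlog hau : a ∈ u generalizing u v
  · refine this v u hv hu hdisj.symm hne.symm hsum.symm (by_contra fun hav ↦ hne ?_)
    exact ht (Finset.coe_subset.2 ((Finset.subset_insert_iff_of_notMem hau).1 hu))
      (Finset.coe_subset.2 ((Finset.subset_insert_iff_of_notMem hav).1 hv)) hsum
  have hav : a ∉ v := Finset.disjoint_left.1 hdisj hau
  have a_eq : a = ∑ x ∈ v, x - ∑ x ∈ u.erase a, x := by
    rw [Finset.sum_erase_eq_sub hau, hsum, sub_sub_cancel]
  rw [a_eq]
  exact sum_sub_sum_mem_span ((Finset.subset_insert_iff_of_notMem hav).1 hv)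
    (Finset.subset_insert_iff.1 hu)

theorem exists_addDissociated_subset_span (s : Finset G) :
    ∃ t ⊆ s, AddDissociated (t : Set G) ∧ (s : Set G) ⊆ Span t := by
  classical
  obtain ⟨t, hmax⟩ :=
    (s.powerset.filter fun t : Finset G ↦ AddDissociated (t : Set G)).exists_maximal ⟨∅, by simp⟩
  simp only [Finset.mem_filter, Finset.mem_powerset] at hmax
  obtain ⟨hts, ht⟩ := hmax.prop
  refine ⟨t, hts, ht, fun a ha ↦ ?_⟩
  by_cases hat : a ∈ t
  · exact coe_subset_span t hat
  · refine mem_span_of_not_addDissociated_insert ht fun h ↦ ?_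
    rw [← Finset.coe_insert] at h
    exact hmax.not_gt ⟨Finset.insert_subset ha hts, h⟩ (Finset.ssubset_insert hat)

theorem chang_for_symmetry_sets_general [DecidableEq G] {A : Finset G} {η : ℝ}
    (hA : A.Nonempty) (hη : 0 < η) :
    ∃ L ⊆ symmSet A η, AddDissociated (L : Set G) ∧ (↑(symmSet A η) : Set G) ⊆ Span L ∧
      (L.card : ℝ) ≤ 2 * η⁻¹ ^ 2 * Real.log A.card := by
  obtain ⟨L, hL, hdiss, hspan⟩ := exists_addDissociated_subset_span (symmSet A η)
  exact ⟨L, hL, hdiss, hspan, card_le_of_addDissociated_of_subset_symmSet hdiss hA hη hL⟩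

end SymmetrySets

theorem chang_for_symmetry_sets :
    ∃ C : ℝ, 0 < C ∧
      ∀ (G : Type) [AddCommGroup G] [DecidableEq G] (A : Finset G) (η : ℝ),
        2 ≤ A.card → 0 < η → η ≤ 1 →
        ∃ L : Finset G,
          (↑(symmSet A η) : Set G) ⊆ Span L ∧
          (L.card : ℝ) ≤ C * η⁻¹ ^ 2 * Real.log A.card := by
  refine ⟨2, two_pos, fun G _ _ A η hA hη _ ↦ ?_⟩
  obtain ⟨L, -, -, hspan, hcard⟩ :=
    chang_for_symmetry_sets_general (Finset.card_pos.1 (two_pos.trans_le hA)) hη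
  exact ⟨L, hspan, hcard⟩
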